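/- arXiv:2501.19193 — 2 statements merged into one kernel-verified Lean document; each statement's English description precedes it below -/
import Mathlib

section
/- Let n ∈ ℝ_{>0}, p ∈ ℝ², and let Λ ⊇ ℤ² be a superlattice of ℤ². Among the vertical lines of p+Λ (lines {x = c} containing points of p+Λ) that intersect the hyperbola xy = n in the open positive quadrant, each of the ⌊(n/det Λ)^{1/3}⌋ leftmost ones contains a vertex of conv(H_n ∩ (p+Λ)); likewise, each of the ⌊(n/det Λ)^{1/3}⌋ bottommost horizontal lines of p+Λ intersecting the hyperbola contains a vertex. Consequently, conv(H_n ∩ (p+Λ)) has at least 2·(n/det Λ)^{1/3} − 2 vertices. -/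
noncomputable section

/-- The closed region on and above the positive branch of the hyperbola `x*y = n`. -/
def Hset (n : ℝ) : Set (ℝ × ℝ) := {q | 0 ≤ q.1 ∧ 0 ≤ q.2 ∧ n ≤ q.1 * q.2}

/-- The integer lattice `ℤ² ⊂ ℝ²`. -/
def intLattice : Set (ℝ × ℝ) := {q | ∃ a b : ℤ, q = ((a : ℝ), (b : ℝ))}

/-- The lattice generated by two vectors `v, w`. -/
def latticeOf (v w : ℝ × ℝ) : Set (ℝ × ℝ) :=
  {q | ∃ a b : ℤ, q = (a : ℝ) • v + (b : ℝ) • w}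

/-- The covolume (absolute determinant) of the lattice with basis `v, w`. -/
def detOf (v w : ℝ × ℝ) : ℝ := |v.1 * w.2 - v.2 * w.1|

/-- The translate `p + S` of a set `S ⊆ ℝ²`. -/
def translateSet (p : ℝ × ℝ) (S : Set (ℝ × ℝ)) : Set (ℝ × ℝ) := (fun q => p + q) '' S

/-!
Let `α` be the spacing of the columns of `p + Λ` and `β` the spacing of the points within a column,
so that `α β = det Λ`, and put `N = (n / det Λ) ^ (1/3)`. The lowest point `(c, y)` of
`H_n ∩ (p + Λ)` on a column of abscissa `c` satisfies `c y < n + β c`.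

If `c > α`, the line `n x + (c² - α²) y = 2 n c` is the secant of the hyperbola over `c ± α`, so its
linear form is at least `2 n c` on every other column of `H_n`, whereas at `(c, y)` it is smaller
than `2 n c` as soon as `c³ β ≤ n α²`, that is, `c ≤ N α`. If `c ≤ α`, the column is the leftmost
one and a steep form works. Either way `(c, y)` is the unique minimiser of a linear form, hence a
vertex, and each of the `⌊N⌋` leftmost columns has `c ≤ N α`. Swapping the coordinates gives the
rows.

If `α'` is the spacing of the rows, then `α' ≤ β`, and for `N > 1` no vertex has both `x ≤ N α` and
`y ≤ N α'`, since then `x y ≤ N² α β < N³ α β = n`. Hence there are at least `2 ⌊N⌋` vertices.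
They are finite in number because a vertex cannot have both of its neighbours in its column, or both
of its neighbours in its row, in `H_n`.
-/

theorem mem_extremePoints_convexHull_of_forall_lt {𝕜 E : Type*} [Field 𝕜] [LinearOrder 𝕜]
    [IsStrictOrderedRing 𝕜] [AddCommGroup E] [Module 𝕜 E] {S : Set E} {q : E} (f : E →ₗ[𝕜] 𝕜)
    (hq : q ∈ S) (hf : ∀ s ∈ S, s ≠ q → f q < f s) :
    q ∈ (convexHull 𝕜 S).extremePoints 𝕜 := by
  let C : Set E := {z | z ≠ q → f q < f z}
  have le_of_mem : ∀ z ∈ C, f q ≤ f z := fun z hz => by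
    rcases eq_or_ne z q with rfl | hzq
    exacts [le_rfl, (hz hzq).le]
  have lt_combination : ∀ x ∈ C, ∀ y ∈ C, (x ≠ q ∨ y ≠ q) → ∀ a b : 𝕜, 0 < a → 0 < b →
      a + b = 1 → f q < f (a • x + b • y) := by
    intro x hx y hy hxy a b ha hb hab
    have key : a * f q + b * f q < a * f x + b * f y := by
      rcases hxy with hxq | hyq
      · exact add_lt_add_of_lt_of_le (mul_lt_mul_of_pos_left (hx hxq) ha)
          (mul_le_mul_of_nonneg_left (le_of_mem y hy) hb.le)
      · exact add_lt_add_of_le_of_lt (mul_le_mul_of_nonneg_left (le_of_mem x hx) ha.le)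
          (mul_lt_mul_of_pos_left (hy hyq) hb)
    simpa [← add_mul, hab] using key
  have hC : Convex 𝕜 C := convex_iff_pairwise_pos.2 fun x hx y hy hxy a b ha hb hab _ =>
    lt_combination x hx y hy (by grind) a b ha hb hab
  have hqC : q ∈ C.extremePoints 𝕜 := by
    refine mem_extremePoints.2 ⟨fun h => absurd rfl h, ?_⟩
    rintro x hx y hy ⟨a, b, ha, hb, hab, hxy⟩
    by_contra hne
    exact (lt_combination x hx y hy (not_and_or.1 hne) a b ha hb hab).ne (by rw [hxy])
  exact inter_extremePoints_subset_extremePoints_of_subset (convexHull_min hf hC)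
    ⟨subset_convexHull 𝕜 S hq, hqC⟩

theorem notMem_extremePoints_of_add_mem_of_sub_mem {𝕜 E : Type*} [Field 𝕜] [LinearOrder 𝕜]
    [IsStrictOrderedRing 𝕜] [AddCommGroup E] [Module 𝕜 E] {A : Set E} {q d : E} (hd : d ≠ 0)
    (hadd : q + d ∈ A) (hsub : q - d ∈ A) : q ∉ A.extremePoints 𝕜 := by
  intro hq
  have hmid : q ∈ openSegment 𝕜 (q + d) (q - d) :=
    ⟨1 / 2, 1 / 2, by positivity, by positivity, add_halves 1, by module⟩
  exact hd (by simpa using ((mem_extremePoints.1 hq).2 _ hadd _ hsub hmid).1)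

section HullVertices

variable {n : ℝ} {L : Set (ℝ × ℝ)}

/-- The vertices of the polyhedron `conv(H_n ∩ L)`; in the application `L = p + Λ`. -/
def hullVertices (n : ℝ) (L : Set (ℝ × ℝ)) : Set (ℝ × ℝ) :=
  (convexHull ℝ (Hset n ∩ L)).extremePoints ℝ

theorem pos_of_mem_Hset (hn : 0 < n) {q : ℝ × ℝ} (hq : q ∈ Hset n) : 0 < q.1 ∧ 0 < q.2 := by
  obtain ⟨h1, h2, hmul⟩ := hq
  have hpos : 0 < q.1 * q.2 := hn.trans_le hmul
  exact ⟨pos_of_mul_pos_left hpos h2, pos_of_mul_pos_right hpos h1⟩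

theorem swap_preimage_Hset (n : ℝ) : Prod.swap ⁻¹' Hset n = Hset n := by
  ext q
  simp only [Hset, Set.mem_preimage, Set.mem_ofPred_eq, Prod.fst_swap, Prod.snd_swap,
    mul_comm q.2]
  tauto

theorem hullVertices_swap_preimage (n : ℝ) (L : Set (ℝ × ℝ)) :
    hullVertices n (Prod.swap ⁻¹' L) = Prod.swap ⁻¹' hullVertices n L := by
  have hextreme := image_extremePoints (LinearEquiv.prodComm ℝ ℝ ℝ) (convexHull ℝ (Hset n ∩ L))
  have hhull := (LinearEquiv.prodComm ℝ ℝ ℝ).toLinearMap.image_convexHull (Hset n ∩ L)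
  have hswap : ⇑(LinearEquiv.prodComm ℝ ℝ ℝ) = Prod.swap := rfl
  simp only [LinearEquiv.coe_coe, hswap, Set.image_swap_eq_preimage_swap, Set.preimage_inter,
    swap_preimage_Hset] at hextreme hhull
  rw [hullVertices, hullVertices, hextreme, hhull]

theorem hullVertices_subset (n : ℝ) (L : Set (ℝ × ℝ)) : hullVertices n L ⊆ Hset n ∩ L :=
  extremePoints_convexHull_subset

theorem mem_hullVertices_of_isLeast {a b c y : ℝ} (hb : 0 < b)
    (hy : IsLeast {z | (c, z) ∈ Hset n ∩ L} y)
    (hoff : ∀ s ∈ Hset n ∩ L, s.1 ≠ c → a * c + b * y < a * s.1 + b * s.2) :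
    (c, y) ∈ hullVertices n L := by
  refine mem_extremePoints_convexHull_of_forall_lt
    (a • LinearMap.fst ℝ ℝ ℝ + b • LinearMap.snd ℝ ℝ ℝ) hy.1 fun s hs hne => ?_
  simp only [LinearMap.add_apply, LinearMap.smul_apply, LinearMap.fst_apply,
    LinearMap.snd_apply, smul_eq_mul]
  by_cases hsc : s.1 = c
  · subst hsc
    have hys : y < s.2 := lt_of_le_of_ne (hy.2 hs) fun h => hne (by rw [h])
    gcongr
  · exact hoff s hs hsc

/-- The line `n x + (c² - α²) y = 2 n c` meets the hyperbola exactly over `c - α` and `c + α`. -/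
theorem le_secant_form {α c x y : ℝ} (hn : 0 ≤ n) (hαc : α ^ 2 ≤ c ^ 2) (hx : 0 < x)
    (hxy : n ≤ x * y) (hgap : α ^ 2 ≤ (x - c) ^ 2) :
    2 * n * c ≤ n * x + (c ^ 2 - α ^ 2) * y := by
  refine le_of_mul_le_mul_left ?_ hx
  have hhyp : (c ^ 2 - α ^ 2) * n ≤ (c ^ 2 - α ^ 2) * (x * y) :=
    mul_le_mul_of_nonneg_left hxy (sub_nonneg.2 hαc)
  have hsq : n * α ^ 2 ≤ n * (x - c) ^ 2 := mul_le_mul_of_nonneg_left hgap hn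
  linarith

theorem secant_form_lt {α β c y : ℝ} (hβ : 0 < β) (hα : 0 < α) (hαc : α < c)
    (hcn : c ^ 3 * β ≤ n * α ^ 2) (hy : c * y < n + β * c) :
    n * c + (c ^ 2 - α ^ 2) * y < 2 * n * c := by
  have hc : 0 < c := hα.trans hαc
  refine lt_of_mul_lt_mul_left ?_ hc.le
  have hlow : (c ^ 2 - α ^ 2) * (c * y) < (c ^ 2 - α ^ 2) * (n + β * c) :=
    mul_lt_mul_of_pos_left hy (by nlinarith)
  have hpos : 0 < α ^ 2 * β * c := by positivity
  linarith

end HullVertices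

/-- The plane set `L` consists of the points `(x₁ + k α, y k + l β)` with `k, l ∈ ℤ`: its columns
have spacing `α`, the points of a column have spacing `β`, and `y k` is the offset of column `k`.
The indexing is normalised by `0 < x₁ ≤ α`, so the columns of positive abscissa are those with
`0 ≤ k`. -/
structure HasColumns (L : Set (ℝ × ℝ)) (x₁ α β : ℝ) : Prop where
  first_pos : 0 < x₁
  first_le : x₁ ≤ α
  step_pos : 0 < β
  exists_offset : ∃ y : ℤ → ℝ, ∀ q, q ∈ L ↔ ∃ k l : ℤ, q = (x₁ + k * α, y k + l * β)

namespace HasColumns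

variable {L : Set (ℝ × ℝ)} {x₁ α β n N c : ℝ}

theorem spacing_pos (h : HasColumns L x₁ α β) : 0 < α :=
  h.first_pos.trans_le h.first_le

theorem vertical_shift_mem (h : HasColumns L x₁ α β) {q : ℝ × ℝ} (hq : q ∈ L) (m : ℤ) :
    q + (0, m * β) ∈ L := by
  obtain ⟨y, hL⟩ := h.exists_offset
  obtain ⟨k, l, rfl⟩ := (hL q).1 hq
  refine (hL _).2 ⟨k, l + m, ?_⟩
  simp only [Prod.mk_add_mk, add_zero, Int.cast_add, add_mul, add_assoc]

theorem fst_eq_or_spacing_le (h : HasColumns L x₁ α β) {q r : ℝ × ℝ} (hq : q ∈ L) (hr : r ∈ L) :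
    q.1 = r.1 ∨ α ≤ |q.1 - r.1| := by
  obtain ⟨y, hL⟩ := h.exists_offset
  obtain ⟨k, _, rfl⟩ := (hL q).1 hq
  obtain ⟨m, _, rfl⟩ := (hL r).1 hr
  rcases eq_or_ne k m with rfl | hkm
  · exact Or.inl rfl
  · have hone : (1 : ℝ) ≤ |(k : ℝ) - m| := by exact_mod_cast Int.one_le_abs (sub_ne_zero.2 hkm)
    right
    calc α ≤ |(k : ℝ) - m| * α := le_mul_of_one_le_left h.spacing_pos.le hone
      _ = |x₁ + k * α - (x₁ + m * α)| := by
        rw [add_sub_add_left_eq_sub, ← sub_mul, abs_mul, abs_of_pos h.spacing_pos]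

theorem exists_fst_eq_iff (h : HasColumns L x₁ α β) (hc : 0 < c) :
    (∃ q ∈ L, q.1 = c) ↔ ∃ j : ℕ, c = x₁ + j * α := by
  obtain ⟨y, hL⟩ := h.exists_offset
  constructor
  · rintro ⟨q, hq, rfl⟩
    obtain ⟨k, l, rfl⟩ := (hL q).1 hq
    have hk : 0 ≤ k := by
      by_contra! hneg
      have hk1 : (k : ℝ) ≤ -1 := by exact_mod_cast Int.le_sub_one_of_lt hneg
      have hle : x₁ + k * α ≤ 0 := by nlinarith [h.first_le, h.spacing_pos]
      exact hle.not_gt hc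
    lift k to ℕ using hk
    exact ⟨k, by simp⟩
  · rintro ⟨j, rfl⟩
    exact ⟨_, (hL _).2 ⟨j, 0, rfl⟩, by simp⟩

theorem finite_setOf_column_le (h : HasColumns L x₁ α β) (B : ℝ) :
    {x | 0 < x ∧ x ≤ B ∧ ∃ q ∈ L, q.1 = x}.Finite := by
  refine ((Set.finite_Iic ⌊B / α⌋₊).image fun j : ℕ => x₁ + j * α).subset ?_
  rintro x ⟨hx, hxB, hxL⟩
  obtain ⟨j, rfl⟩ := (h.exists_fst_eq_iff hx).1 hxL
  refine ⟨j, Nat.le_floor ((le_div_iff₀ h.spacing_pos).2 ?_), rfl⟩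
  linarith [h.first_pos]

theorem injective_column (h : HasColumns L x₁ α β) :
    Function.Injective fun j : ℕ => x₁ + j * α := fun i j hij => by
  simpa [h.spacing_pos.ne'] using hij

theorem ncard_setOf_column_lt (h : HasColumns L x₁ α β) (j : ℕ) :
    {x | 0 < x ∧ x < x₁ + j * α ∧ ∃ q ∈ L, q.1 = x}.ncard = j := by
  have hcolumn : ∀ i : ℕ, 0 < x₁ + i * α := fun i =>
    add_pos_of_pos_of_nonneg h.first_pos (mul_nonneg i.cast_nonneg h.spacing_pos.le)
  have himage : {x | 0 < x ∧ x < x₁ + j * α ∧ ∃ q ∈ L, q.1 = x} =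
      (fun i : ℕ => x₁ + i * α) '' Finset.range j := by
    ext x
    constructor
    · rintro ⟨hx, hxj, hxL⟩
      obtain ⟨i, rfl⟩ := (h.exists_fst_eq_iff hx).1 hxL
      exact ⟨i, by simpa [h.spacing_pos] using hxj, rfl⟩
    · rintro ⟨i, hi, rfl⟩
      exact ⟨hcolumn i, by simpa [h.spacing_pos] using hi,
        (h.exists_fst_eq_iff (hcolumn i)).2 ⟨i, rfl⟩⟩
  rw [himage, Set.ncard_image_of_injective _ h.injective_column, Set.ncard_coe_finset,
    Finset.card_range]

theorem exists_isLeast (h : HasColumns L x₁ α β) (hn : 0 ≤ n) (hc : 0 < c)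
    (hcL : ∃ q ∈ L, q.1 = c) : ∃ y, IsLeast {z | (c, z) ∈ Hset n ∩ L} y := by
  obtain ⟨y, hL⟩ := h.exists_offset
  obtain ⟨q, hq, rfl⟩ := hcL
  obtain ⟨k, _, rfl⟩ := (hL q).1 hq
  obtain ⟨m, ⟨hm, hm'⟩, -⟩ := existsUnique_add_zsmul_mem_Ico h.step_pos (y k) (n / (x₁ + k * α))
  rw [zsmul_eq_mul] at hm hm'
  refine ⟨y k + m * β, ⟨⟨hc.le, (div_nonneg hn hc.le).trans hm, (div_le_iff₀' hc).1 hm⟩,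
    (hL _).2 ⟨k, m, rfl⟩⟩, ?_⟩
  rintro z ⟨⟨-, -, hz⟩, hzL⟩
  obtain ⟨k', l, hkl⟩ := (hL _).1 hzL
  obtain ⟨hk, rfl⟩ := Prod.mk.inj hkl
  obtain rfl : k = k' := by simpa [h.spacing_pos.ne'] using hk
  by_contra! hlt
  have hlm : (l : ℝ) + 1 ≤ m := by
    have : l < m := by
      exact_mod_cast lt_of_mul_lt_mul_right (lt_of_add_lt_add_left hlt) h.step_pos.le
    exact_mod_cast this
  have hnz : n / (x₁ + k * α) ≤ y k + l * β := (div_le_iff₀' hc).2 hz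
  nlinarith [h.step_pos]

theorem mul_snd_lt_of_isLeast (h : HasColumns L x₁ α β) (hn : 0 < n) {y : ℝ}
    (hy : IsLeast {z | (c, z) ∈ Hset n ∩ L} y) : c * y < n + β * c := by
  have hc : 0 < c := (pos_of_mem_Hset hn hy.1.1).1
  have hbelow : (c, y - β) ∈ L := by
    simpa [sub_eq_add_neg] using h.vertical_shift_mem hy.1.2 (-1)
  by_contra! hge
  have hn' : n ≤ c * (y - β) := by linarith
  have hle : y ≤ y - β := hy.2
    ⟨⟨hc.le, (pos_of_mul_pos_right (hn.trans_le hn') hc.le).le, hn'⟩, hbelow⟩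
  linarith [h.step_pos]

/-- There is no column to the left of `c` in `H_n`, so a steep linear form separates. -/
theorem mem_hullVertices_of_isLeast_of_le (h : HasColumns L x₁ α β) (hn : 0 < n) (hcα : c ≤ α)
    {y : ℝ} (hy : IsLeast {z | (c, z) ∈ Hset n ∩ L} y) : (c, y) ∈ hullVertices n L := by
  refine mem_hullVertices_of_isLeast (a := y) h.spacing_pos hy fun s hs hsc => ?_
  obtain ⟨hs1, hs2⟩ := pos_of_mem_Hset hn hs.1
  have hright : c + α ≤ s.1 := by
    have hgap := (h.fst_eq_or_spacing_le hs.2 hy.1.2).resolve_left hsc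
    rcases le_abs.1 hgap with hgap | hgap <;> simp only at hgap <;> linarith
  calc y * c + α * y = y * (c + α) := by ring
    _ ≤ y * s.1 := mul_le_mul_of_nonneg_left hright (pos_of_mem_Hset hn hy.1.1).2.le
    _ < y * s.1 + α * s.2 := lt_add_of_pos_right _ (mul_pos h.spacing_pos hs2)

theorem mem_hullVertices_of_isLeast_of_lt (h : HasColumns L x₁ α β) (hn : 0 < n) (hαc : α < c)
    (hcn : c ^ 3 * β ≤ n * α ^ 2) {y : ℝ} (hy : IsLeast {z | (c, z) ∈ Hset n ∩ L} y) :
    (c, y) ∈ hullVertices n L := by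
  have hsq : α ^ 2 < c ^ 2 := pow_lt_pow_left₀ hαc h.spacing_pos.le two_ne_zero
  refine mem_hullVertices_of_isLeast (a := n) (sub_pos.2 hsq) hy fun s hs hsc => ?_
  have hgap : α ^ 2 ≤ (s.1 - c) ^ 2 := by
    rw [← sq_abs (s.1 - c)]
    exact pow_le_pow_left₀ h.spacing_pos.le
      ((h.fst_eq_or_spacing_le hs.2 hy.1.2).resolve_left hsc) 2
  calc n * c + (c ^ 2 - α ^ 2) * y < 2 * n * c :=
        secant_form_lt h.step_pos h.spacing_pos hαc hcn (h.mul_snd_lt_of_isLeast hn hy)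
    _ ≤ n * s.1 + (c ^ 2 - α ^ 2) * s.2 :=
        le_secant_form hn.le hsq.le (pos_of_mem_Hset hn hs.1).1 hs.1.2.2 hgap

theorem exists_hullVertex_fst_eq (h : HasColumns L x₁ α β) (hn : 0 < n) (hc : 0 < c)
    (hcL : ∃ q ∈ L, q.1 = c) (hcn : c ^ 3 * β ≤ n * α ^ 2) :
    ∃ q ∈ hullVertices n L, q.1 = c := by
  obtain ⟨y, hy⟩ := h.exists_isLeast hn.le hc hcL
  refine ⟨(c, y), ?_, rfl⟩
  rcases le_or_gt c α with hcα | hαc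
  · exact h.mem_hullVertices_of_isLeast_of_le hn hcα hy
  · exact h.mem_hullVertices_of_isLeast_of_lt hn hαc hcn hy

theorem column_le (h : HasColumns L x₁ α β) {j : ℕ} (hj : (j + 1 : ℝ) ≤ N) :
    x₁ + j * α ≤ N * α := by
  nlinarith [h.first_le, h.spacing_pos]

theorem exists_hullVertex_column (h : HasColumns L x₁ α β) (hn : 0 < n)
    (hN : N ^ 3 * (α * β) = n) {j : ℕ} (hj : (j + 1 : ℝ) ≤ N) :
    ∃ q ∈ hullVertices n L, q.1 = x₁ + j * α := by
  have hpos : 0 < x₁ + j * α :=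
    add_pos_of_pos_of_nonneg h.first_pos (mul_nonneg j.cast_nonneg h.spacing_pos.le)
  refine h.exists_hullVertex_fst_eq hn hpos ((h.exists_fst_eq_iff hpos).2 ⟨j, rfl⟩) ?_
  calc (x₁ + j * α) ^ 3 * β ≤ (N * α) ^ 3 * β :=
        mul_le_mul_of_nonneg_right (pow_le_pow_left₀ hpos.le (h.column_le hj) 3) h.step_pos.le
    _ = n * α ^ 2 := by rw [← hN]; ring

theorem exists_hullVertex_of_ncard_lt_floor (h : HasColumns L x₁ α β) (hn : 0 < n)
    (hN : N ^ 3 * (α * β) = n) (hc : 0 < c) (hcL : ∃ q ∈ L, q.1 = c)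
    (hcard : ({x | 0 < x ∧ x < c ∧ ∃ q ∈ L, q.1 = x}.ncard : ℤ) < ⌊N⌋) :
    ∃ q ∈ hullVertices n L, q.1 = c := by
  obtain ⟨j, rfl⟩ := (h.exists_fst_eq_iff hc).1 hcL
  rw [h.ncard_setOf_column_lt] at hcard
  exact h.exists_hullVertex_column hn hN (by exact_mod_cast Int.le_floor.1 hcard)

theorem floor_le_ncard_hullVertices (h : HasColumns L x₁ α β) (hn : 0 < n) (hN0 : 0 ≤ N)
    (hN : N ^ 3 * (α * β) = n) (hfin : (hullVertices n L).Finite) :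
    ⌊N⌋₊ ≤ {q ∈ hullVertices n L | q.1 ≤ N * α}.ncard := by
  have hfin' : {q ∈ hullVertices n L | q.1 ≤ N * α}.Finite := hfin.sep _
  have hcolumns : (fun j : ℕ => x₁ + j * α) '' Finset.range ⌊N⌋₊ ⊆
      Prod.fst '' {q ∈ hullVertices n L | q.1 ≤ N * α} := by
    rintro _ ⟨j, hj, rfl⟩
    have hjN : (j + 1 : ℝ) ≤ N := by
      exact_mod_cast (Nat.le_floor_iff hN0).1 (Nat.succ_le_of_lt (Finset.mem_range.1 hj))
    obtain ⟨q, hq, hqj⟩ := h.exists_hullVertex_column hn hN hjN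
    exact ⟨q, ⟨hq, hqj ▸ h.column_le hjN⟩, hqj⟩
  calc ⌊N⌋₊ = ((fun j : ℕ => x₁ + j * α) '' Finset.range ⌊N⌋₊).ncard := by
        rw [Set.ncard_image_of_injective _ h.injective_column, Set.ncard_coe_finset,
          Finset.card_range]
    _ ≤ (Prod.fst '' {q ∈ hullVertices n L | q.1 ≤ N * α}).ncard :=
        Set.ncard_le_ncard hcolumns (hfin'.image _)
    _ ≤ {q ∈ hullVertices n L | q.1 ≤ N * α}.ncard := Set.ncard_image_le hfin'

/-- Otherwise both `q - (0, β)` and `q + (0, β)` would lie in `H_n ∩ L`. -/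
theorem snd_lt_of_mem_hullVertices (h : HasColumns L x₁ α β) (hn : 0 < n) {q : ℝ × ℝ}
    (hq : q ∈ hullVertices n L) : q.2 < n / x₁ + β := by
  obtain ⟨hqH, hqL⟩ := hullVertices_subset n L hq
  obtain ⟨hq1, hq2⟩ := pos_of_mem_Hset hn hqH
  have hx₁ : x₁ ≤ q.1 := by
    obtain ⟨j, hj⟩ := (h.exists_fst_eq_iff hq1).1 ⟨q, hqL, rfl⟩
    exact hj ▸ le_add_of_nonneg_right (mul_nonneg j.cast_nonneg h.spacing_pos.le)
  by_contra! hge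
  have hdiv : n / x₁ ≤ q.2 - β := le_sub_iff_add_le.2 hge
  have hpos : 0 ≤ q.2 - β := (div_pos hn h.first_pos).le.trans hdiv
  have hmul : n ≤ q.1 * (q.2 - β) := calc
    n ≤ x₁ * (q.2 - β) := (div_le_iff₀' h.first_pos).1 hdiv
    _ ≤ q.1 * (q.2 - β) := mul_le_mul_of_nonneg_right hx₁ hpos
  have hbelow : q - (0, β) ∈ Hset n ∩ L :=
    ⟨by simpa [Hset] using ⟨hq1.le, le_of_sub_nonneg hpos, hmul⟩,
      by simpa [sub_eq_add_neg] using h.vertical_shift_mem hqL (-1)⟩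
  have habove : q + (0, β) ∈ Hset n ∩ L := by
    refine ⟨⟨?_, ?_, ?_⟩, by simpa using h.vertical_shift_mem hqL 1⟩ <;>
      simp only [Prod.fst_add, Prod.snd_add, add_zero] <;> nlinarith [h.step_pos]
  exact notMem_extremePoints_of_add_mem_of_sub_mem (by simp [h.step_pos.ne'])
    (subset_convexHull ℝ _ habove) (subset_convexHull ℝ _ hbelow) hq

section RowsAndColumns

variable {y₁ α' β' : ℝ}

theorem finite_hullVertices (h : HasColumns L x₁ α β)
    (h' : HasColumns (Prod.swap ⁻¹' L) y₁ α' β') (hn : 0 < n) : (hullVertices n L).Finite := by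
  refine ((h.finite_setOf_column_le (n / y₁ + β')).prod
    (h'.finite_setOf_column_le (n / x₁ + β))).subset fun q hq => ?_
  obtain ⟨hqH, hqL⟩ := hullVertices_subset n L hq
  obtain ⟨hq1, hq2⟩ := pos_of_mem_Hset hn hqH
  have hq' : q.swap ∈ hullVertices n (Prod.swap ⁻¹' L) := by
    rwa [hullVertices_swap_preimage, Set.mem_preimage, Prod.swap_swap]
  exact ⟨⟨hq1, (h'.snd_lt_of_mem_hullVertices hn hq').le, q, hqL, rfl⟩,
    ⟨hq2, (h.snd_lt_of_mem_hullVertices hn hq).le, q.swap, by simpa using hqL, rfl⟩⟩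

theorem row_spacing_le_step (h : HasColumns L x₁ α β)
    (h' : HasColumns (Prod.swap ⁻¹' L) y₁ α' β') : α' ≤ β := by
  obtain ⟨y, hL⟩ := h.exists_offset
  have hq : (x₁, y 0) ∈ L := (hL _).2 ⟨0, 0, by simp⟩
  have hr : (x₁, y 0 + β) ∈ L := (hL _).2 ⟨0, 1, by simp⟩
  have hgap := h'.fst_eq_or_spacing_le (q := (y 0 + β, x₁)) (r := (y 0, x₁)) hr hq
  simpa [h.step_pos.ne', abs_of_pos h.step_pos] using hgap

theorem disjoint_left_lower_hullVertices (h : HasColumns L x₁ α β)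
    (h' : HasColumns (Prod.swap ⁻¹' L) y₁ α' β') (hN1 : 1 < N) (hN : N ^ 3 * (α * β) = n) :
    Disjoint {q ∈ hullVertices n L | q.1 ≤ N * α} {q ∈ hullVertices n L | q.2 ≤ N * α'} := by
  rw [Set.disjoint_left]
  rintro q ⟨hq, hleft⟩ ⟨-, hlower⟩
  obtain ⟨⟨-, hq2, hmul⟩, -⟩ := hullVertices_subset n L hq
  have hα := h.spacing_pos
  have hβ := h.step_pos
  have hN0 : 0 < N := one_pos.trans hN1
  have : n < n := calc
    n ≤ q.1 * q.2 := hmul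
    _ ≤ N * α * (N * β) := mul_le_mul hleft
        (hlower.trans (mul_le_mul_of_nonneg_left (h.row_spacing_le_step h') hN0.le)) hq2
        (by positivity)
    _ = N ^ 2 * (α * β) := by ring
    _ < N ^ 3 * (α * β) := by gcongr; norm_num
    _ = n := hN
  exact this.false

theorem two_mul_sub_two_le_ncard_hullVertices (h : HasColumns L x₁ α β)
    (h' : HasColumns (Prod.swap ⁻¹' L) y₁ α' β') (hn : 0 < n)
    (hN : N ^ 3 * (α * β) = n) (hN' : N ^ 3 * (α' * β') = n) :
    2 * N - 2 ≤ ((hullVertices n L).ncard : ℝ) := by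
  rcases le_or_gt N 1 with hN1 | hN1
  · linarith [(hullVertices n L).ncard.cast_nonneg (α := ℝ)]
  have hN0 : 0 ≤ N := zero_le_one.trans hN1.le
  have hfin := h.finite_hullVertices h' hn
  have hfin' : (hullVertices n (Prod.swap ⁻¹' L)).Finite := by
    rw [hullVertices_swap_preimage]
    exact hfin.preimage Prod.swap_injective.injOn
  set left := {q ∈ hullVertices n L | q.1 ≤ N * α}
  set lower := {q ∈ hullVertices n L | q.2 ≤ N * α'}
  have hleft : ⌊N⌋₊ ≤ left.ncard := h.floor_le_ncard_hullVertices hn hN0 hN hfin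
  have hlower : ⌊N⌋₊ ≤ lower.ncard := calc
    ⌊N⌋₊ ≤ (Prod.swap ⁻¹' lower).ncard := by
      have hcount := h'.floor_le_ncard_hullVertices hn hN0 hN' hfin'
      rwa [hullVertices_swap_preimage] at hcount
    _ = lower.ncard := by
      rw [← Set.image_swap_eq_preimage_swap, Set.ncard_image_of_injective _ Prod.swap_injective]
  have htotal : ⌊N⌋₊ + ⌊N⌋₊ ≤ (hullVertices n L).ncard := calc
    ⌊N⌋₊ + ⌊N⌋₊ ≤ left.ncard + lower.ncard := add_le_add hleft hlower
    _ = (left ∪ lower).ncard := (Set.ncard_union_eq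
        (h.disjoint_left_lower_hullVertices h' hN1 hN) (hfin.sep _) (hfin.sep _)).symm
    _ ≤ (hullVertices n L).ncard :=
        Set.ncard_le_ncard (Set.union_subset (Set.sep_subset _ _) (Set.sep_subset _ _)) hfin
  have htotal' : (⌊N⌋₊ : ℝ) + ⌊N⌋₊ ≤ (hullVertices n L).ncard := by exact_mod_cast htotal
  linarith [Nat.lt_floor_add_one N]

end RowsAndColumns

end HasColumns

section Lattice

variable {v w : ℝ × ℝ}

theorem detOf_combination (a b c d : ℤ) (v w : ℝ × ℝ) :
    detOf ((a : ℝ) • v + (b : ℝ) • w) ((c : ℝ) • v + (d : ℝ) • w) =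
      |((a * d - b * c : ℤ) : ℝ)| * detOf v w := by
  rw [detOf, detOf, ← abs_mul]
  congr 1
  simp only [Prod.fst_add, Prod.snd_add, Prod.smul_fst, Prod.smul_snd, smul_eq_mul]
  push_cast
  ring

theorem latticeOf_combination {a b c d : ℤ} (h : IsUnit (a * d - b * c)) (v w : ℝ × ℝ) :
    latticeOf ((a : ℝ) • v + (b : ℝ) • w) ((c : ℝ) • v + (d : ℝ) • w) = latticeOf v w := by
  ext q
  constructor
  · rintro ⟨k, l, rfl⟩
    exact ⟨k * a + l * c, k * b + l * d, by push_cast; module⟩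
  · rintro ⟨k, l, rfl⟩
    set e := a * d - b * c with he
    have hee : ((a : ℝ) * d - b * c) * e = 1 := by
      exact_mod_cast he ▸ Int.isUnit_mul_self h
    refine ⟨e * (d * k - c * l), e * (a * l - b * k), ?_⟩
    push_cast
    calc (k : ℝ) • v + (l : ℝ) • w
        = (((a : ℝ) * d - b * c) * e) • ((k : ℝ) • v + (l : ℝ) • w) := by rw [hee, one_smul]
      _ = _ := by module

theorem detOf_pos_of_axis_vectors {a b : ℝ} (ha : a ≠ 0) (hb : b ≠ 0)
    (hav : (a, 0) ∈ latticeOf v w) (hbv : (0, b) ∈ latticeOf v w) : 0 < detOf v w := by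
  obtain ⟨k, l, hkl⟩ := hav
  obtain ⟨k', l', hkl'⟩ := hbv
  have hdet := detOf_combination k l k' l' v w
  rw [← hkl, ← hkl'] at hdet
  refine (abs_nonneg _).lt_of_ne' fun h0 => mul_ne_zero ha hb ?_
  simpa [detOf, h0] using hdet

theorem exists_latticeOf_eq_of_vertical_mem {b : ℝ} (hb : b ≠ 0) (hbv : (0, b) ∈ latticeOf v w) :
    ∃ v' w' : ℝ × ℝ, w'.1 = 0 ∧ latticeOf v w = latticeOf v' w' ∧ detOf v w = detOf v' w' := by
  obtain ⟨k, l, hkl⟩ := hbv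
  have hgcd : 0 < Int.gcd k l := by
    refine Int.gcd_pos_iff.2 (not_and_or.1 ?_)
    rintro ⟨rfl, rfl⟩
    exact hb (by simpa using congrArg Prod.snd hkl)
  obtain ⟨g, s, t, hg, hst, rfl, rfl⟩ := Int.exists_gcd_one' hgcd
  obtain ⟨x, y, hxy⟩ := Int.isCoprime_iff_gcd_eq_one.2 hst
  have hdet : y * t - -x * s = 1 := by linarith
  refine ⟨(y : ℝ) • v + ((-x : ℤ) : ℝ) • w, (s : ℝ) • v + (t : ℝ) • w, ?_,
    (latticeOf_combination (hdet ▸ isUnit_one) v w).symm, ?_⟩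
  · have hg' : (g : ℝ) ≠ 0 := by exact_mod_cast hg.ne'
    refine (mul_eq_zero.1 ?_).resolve_left hg'
    have hfst := congrArg Prod.fst hkl
    simp only [Prod.fst_add, Prod.smul_fst, smul_eq_mul] at hfst ⊢
    push_cast at hfst
    linarith
  · rw [detOf_combination, hdet, Int.cast_one, abs_one, one_mul]

theorem exists_isUnit_mul_eq_abs (r : ℝ) : ∃ e : ℤ, IsUnit e ∧ e * r = |r| := by
  rcases abs_choice r with h | h
  · exact ⟨1, isUnit_one, by simp [h]⟩
  · exact ⟨-1, isUnit_one.neg, by simp [h]⟩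

theorem exists_latticeOf_eq_hermite {b : ℝ} (hdet : 0 < detOf v w) (hb : b ≠ 0)
    (hbv : (0, b) ∈ latticeOf v w) :
    ∃ α γ β : ℝ, 0 < α ∧ 0 < β ∧ latticeOf v w = latticeOf (α, γ) (0, β) ∧
      α * β = detOf v w := by
  obtain ⟨v', w', hw', hlat, hdet'⟩ := exists_latticeOf_eq_of_vertical_mem hb hbv
  have habs : |v'.1| * |w'.2| = detOf v w := by rw [hdet', detOf, hw', mul_zero, sub_zero, abs_mul]
  have hne := habs ▸ hdet
  obtain ⟨e, he, hev⟩ := exists_isUnit_mul_eq_abs v'.1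
  obtain ⟨f, hf, hfw⟩ := exists_isUnit_mul_eq_abs w'.2
  refine ⟨|v'.1|, e * v'.2, |w'.2|, pos_of_mul_pos_left hne (abs_nonneg _),
    pos_of_mul_pos_right hne (abs_nonneg _), ?_, habs⟩
  have hsigns := latticeOf_combination (a := e) (b := 0) (c := 0) (d := f)
    (by simpa using he.mul hf) v' w'
  rw [hlat, ← hsigns]
  congr 1 <;> ext <;> simp [hev, hfw, hw']

theorem exists_hasColumns {b : ℝ} (p : ℝ × ℝ) (hdet : 0 < detOf v w) (hb : b ≠ 0)
    (hbv : (0, b) ∈ latticeOf v w) :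
    ∃ x₁ α β : ℝ, HasColumns (translateSet p (latticeOf v w)) x₁ α β ∧ α * β = detOf v w := by
  obtain ⟨α, γ, β, hα, hβ, hlat, hαβ⟩ := exists_latticeOf_eq_hermite hdet hb hbv
  obtain ⟨m, ⟨hm, hm'⟩, -⟩ := existsUnique_add_zsmul_mem_Ioc hα p.1 0
  rw [zsmul_eq_mul] at hm hm'
  rw [zero_add] at hm'
  refine ⟨p.1 + m * α, α, β, ⟨hm, hm', hβ, fun k => p.2 + (k + m) * γ, fun q => ?_⟩, hαβ⟩
  rw [hlat]
  constructor
  · rintro ⟨_, ⟨k, l, rfl⟩, rfl⟩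
    refine ⟨k - m, l, ?_⟩
    ext <;> simp <;> ring
  · rintro ⟨k, l, rfl⟩
    refine ⟨_, ⟨k + m, l, rfl⟩, ?_⟩
    ext <;> simp <;> ring

theorem detOf_swap (v w : ℝ × ℝ) : detOf v.swap w.swap = detOf v w := by
  simp only [detOf, Prod.fst_swap, Prod.snd_swap]
  rw [← abs_neg, neg_sub]

theorem swap_preimage_latticeOf (v w : ℝ × ℝ) :
    Prod.swap ⁻¹' latticeOf v w = latticeOf v.swap w.swap := by
  ext q
  simp [latticeOf, Prod.ext_iff, and_comm]

theorem swap_preimage_translateSet (p : ℝ × ℝ) (S : Set (ℝ × ℝ)) :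
    Prod.swap ⁻¹' translateSet p S = translateSet p.swap (Prod.swap ⁻¹' S) := by
  ext q
  simp [translateSet]

theorem exists_hasColumns_swap_preimage {a : ℝ} (p : ℝ × ℝ) (hdet : 0 < detOf v w) (ha : a ≠ 0)
    (hav : (a, 0) ∈ latticeOf v w) :
    ∃ y₁ α' β' : ℝ, HasColumns (Prod.swap ⁻¹' translateSet p (latticeOf v w)) y₁ α' β' ∧
      α' * β' = detOf v w := by
  rw [swap_preimage_translateSet, swap_preimage_latticeOf, ← detOf_swap]
  refine exists_hasColumns p.swap (by rwa [detOf_swap]) ha ?_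
  rwa [← swap_preimage_latticeOf]

end Lattice

theorem exists_mem_swap_preimage_fst_eq {L : Set (ℝ × ℝ)} {c : ℝ} :
    (∃ q ∈ Prod.swap ⁻¹' L, q.1 = c) ↔ ∃ q ∈ L, q.2 = c :=
  ⟨fun ⟨q, hq, hqc⟩ => ⟨q.swap, hq, hqc⟩, fun ⟨q, hq, hqc⟩ => ⟨q.swap, by simpa using hq, hqc⟩⟩

theorem statement9_general (n : ℝ) (hn : 0 < n) (p v w : ℝ × ℝ) {a b : ℝ} (ha : a ≠ 0)
    (hb : b ≠ 0) (hav : (a, 0) ∈ latticeOf v w) (hbv : (0, b) ∈ latticeOf v w) :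
    (∀ cx : ℝ, 0 < cx → (∃ q ∈ translateSet p (latticeOf v w), q.1 = cx) →
      (({c' : ℝ | 0 < c' ∧ c' < cx ∧
          ∃ q ∈ translateSet p (latticeOf v w), q.1 = c'}).ncard : ℤ) <
        ⌊(n / detOf v w) ^ ((1 : ℝ) / 3)⌋ →
      ∃ q ∈ Set.extremePoints ℝ
          (convexHull ℝ (Hset n ∩ translateSet p (latticeOf v w))), q.1 = cx) ∧
    (∀ cy : ℝ, 0 < cy → (∃ q ∈ translateSet p (latticeOf v w), q.2 = cy) →
      (({c' : ℝ | 0 < c' ∧ c' < cy ∧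
          ∃ q ∈ translateSet p (latticeOf v w), q.2 = c'}).ncard : ℤ) <
        ⌊(n / detOf v w) ^ ((1 : ℝ) / 3)⌋ →
      ∃ q ∈ Set.extremePoints ℝ
          (convexHull ℝ (Hset n ∩ translateSet p (latticeOf v w))), q.2 = cy) ∧
    2 * (n / detOf v w) ^ ((1 : ℝ) / 3) - 2 ≤
      ((Set.extremePoints ℝ
          (convexHull ℝ (Hset n ∩ translateSet p (latticeOf v w)))).ncard : ℝ) := by
  have hdet := detOf_pos_of_axis_vectors ha hb hav hbv
  obtain ⟨x₁, α, β, h, hαβ⟩ := exists_hasColumns p hdet hb hbv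
  obtain ⟨y₁, α', β', h', hαβ'⟩ := exists_hasColumns_swap_preimage p hdet ha hav
  set L := translateSet p (latticeOf v w)
  set N := (n / detOf v w) ^ ((1 : ℝ) / 3) with hN
  have hcube : N ^ 3 * detOf v w = n := by
    rw [hN, one_div, ← Nat.cast_ofNat, Real.rpow_inv_natCast_pow (by positivity) three_ne_zero,
      div_mul_cancel₀ _ hdet.ne']
  have hcolumns : N ^ 3 * (α * β) = n := by rwa [hαβ]
  have hrows : N ^ 3 * (α' * β') = n := by rwa [hαβ']
  refine ⟨fun c hc hcL hcard => h.exists_hullVertex_of_ncard_lt_floor hn hcolumns hc hcL hcard,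
    fun c hc hcL hcard => ?_, h.two_mul_sub_two_le_ncard_hullVertices h' hn hcolumns hrows⟩
  simp only [← exists_mem_swap_preimage_fst_eq] at hcL hcard
  have hvertex := h'.exists_hullVertex_of_ncard_lt_floor hn hrows hc hcL hcard
  rwa [hullVertices_swap_preimage, exists_mem_swap_preimage_fst_eq] at hvertex

/-- Each of the `⌊(n/det Λ)^(1/3)⌋` leftmost vertical lines of `p+Λ` meeting the
hyperbola `xy = n` in the open positive quadrant (i.e. with `x`-coordinate `> 0`)
contains a vertex of `conv(H_n ∩ (p+Λ))`; likewise for the bottommost horizontal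
lines; consequently there are at least `2 (n/det Λ)^(1/3) - 2` vertices. -/
theorem statement9 (n : ℝ) (hn : 0 < n) (p v w : ℝ × ℝ)
    (hvw : v.1 * w.2 - v.2 * w.1 ≠ 0)
    (hsup : intLattice ⊆ latticeOf v w) :
    (∀ cx : ℝ, 0 < cx → (∃ q ∈ translateSet p (latticeOf v w), q.1 = cx) →
      (({c' : ℝ | 0 < c' ∧ c' < cx ∧
          ∃ q ∈ translateSet p (latticeOf v w), q.1 = c'}).ncard : ℤ) <
        ⌊(n / detOf v w) ^ ((1 : ℝ) / 3)⌋ →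
      ∃ q ∈ Set.extremePoints ℝ
          (convexHull ℝ (Hset n ∩ translateSet p (latticeOf v w))), q.1 = cx) ∧
    (∀ cy : ℝ, 0 < cy → (∃ q ∈ translateSet p (latticeOf v w), q.2 = cy) →
      (({c' : ℝ | 0 < c' ∧ c' < cy ∧
          ∃ q ∈ translateSet p (latticeOf v w), q.2 = c'}).ncard : ℤ) <
        ⌊(n / detOf v w) ^ ((1 : ℝ) / 3)⌋ →
      ∃ q ∈ Set.extremePoints ℝ
          (convexHull ℝ (Hset n ∩ translateSet p (latticeOf v w))), q.2 = cy) ∧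
    2 * (n / detOf v w) ^ ((1 : ℝ) / 3) - 2 ≤
      ((Set.extremePoints ℝ
          (convexHull ℝ (Hset n ∩ translateSet p (latticeOf v w)))).ncard : ℝ) := by
  exact statement9_general n hn p v w one_ne_zero one_ne_zero
    (hsup ⟨1, 0, by simp⟩) (hsup ⟨0, 1, by simp⟩)

end
end

section
/- Let n ∈ ℝ_{>0}, let Λ ⊂ ℚ² be a rational lattice, and let p be a vertex of conv(H_n ∩ (p+Λ)). If Nextpt(p) ≠ ∞, then Nextpt(p) is the next vertex of conv(H_n ∩ (p+Λ)), i.e., the vertex whose x-coordinate is the minimum of the x-coordinates of all vertices with x-coordinate strictly greater than p_x. -/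
/-!
Both axes meet a rational lattice `Λ` in nonzero vectors. Translating upwards by such a vector
`(0, Y)` preserves `C = conv (H ∩ (p + Λ))`, so a vertex of `C` lies strictly below every chord of
`C` whose horizontal extent contains it in its interior. Hence the line `ℓ` through `p` in
direction `m = Minsl(p)` supports `C`: to the right of `p` this is the minimality of the slope,
and for a lattice point to the left of `p` it holds because `p` lies below the chord from that
point to `p + m`. Since `m` is primitive and `Λ` is discrete, the lattice points on `ℓ` are the
`p + j m` with `j ∈ ℤ`, so `Nextpt(p)` is the rightmost of those in `H`. It is therefore the strict
minimizer over `C` of the pair (height above `ℓ`, minus the first coordinate) in lexicographic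
order, and so a vertex. A vertex between `p` and `Nextpt(p)` would lie strictly below the chord
joining them, which is contained in `ℓ`.
-/

noncomputable section

/-- A point of `ℝ²` with rational coordinates. -/
def ratPoint (q : ℝ × ℝ) : Prop := ∃ a b : ℚ, q = ((a : ℝ), (b : ℝ))

/-- Slope comparison for vectors with nonnegative `x`-coordinate (where vertical
vectors pointing down have slope `-∞` and vertical vectors pointing up `+∞`):
`slope u ≤ slope v` iff `u_y v_x ≤ v_y u_x`. -/
def slopeLE (u v : ℝ × ℝ) : Prop := u.2 * v.1 ≤ v.2 * u.1

/-- `ms = Minsl(p)`: the primitive nonzero vector of smallest slope in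
`(H_n ∩ (p+Λ) - p) ∩ {x ≥ 0} ⊆ Λ`. -/
def IsMinsl (n : ℝ) (Λ : Set (ℝ × ℝ)) (p ms : ℝ × ℝ) : Prop :=
  ms ∈ Λ ∧ ms ≠ 0 ∧ 0 ≤ ms.1 ∧ p + ms ∈ Hset n ∧
  (∀ u ∈ Λ, ∀ k : ℤ, 2 ≤ k → ms ≠ (k : ℝ) • u) ∧
  ∀ u ∈ Λ, u ≠ 0 → 0 ≤ u.1 → p + u ∈ Hset n → slopeLE ms u

/-! ### Primitive vectors and rational lattices -/

section Lattice

variable {E : Type*} [AddCommGroup E] [Module ℝ E]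

/-- `m` is not a proper integer multiple `k • u`, `k ≥ 2`, of an element `u` of `Λ`; this is
primitivity of a lattice vector, with the factor cast to `ℝ` as in `IsMinsl`. -/
def IsPrimitiveIn (Λ : Set E) (m : E) : Prop :=
  ∀ u ∈ Λ, ∀ k : ℤ, 2 ≤ k → m ≠ (k : ℝ) • u

lemma IsPrimitiveIn.isUnit_of_eq_smul {Λ : Submodule ℤ E} {m u : E}
    (hprim : IsPrimitiveIn (Λ : Set E) m) (hm0 : m ≠ 0) (hu : u ∈ Λ) {k : ℤ}
    (hk : m = (k : ℝ) • u) : IsUnit k := by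
  have hk0 : k ≠ 0 := by
    rintro rfl
    exact hm0 (by simpa using hk)
  have hlt : k < 2 := lt_of_not_ge fun h => hprim u hu k h hk
  have hgt : -k < 2 := lt_of_not_ge fun h =>
    hprim (-u) (Λ.neg_mem hu) (-k) h (by simpa using hk)
  rw [Int.isUnit_iff]
  omega

/-- The real factors `c` with `c • m ∈ Λ` form a discrete, hence cyclic, subgroup of `ℝ` that
contains `1`; by primitivity `1` is a generator. -/
lemma IsPrimitiveIn.exists_intCast_eq_of_smul_mem [TopologicalSpace E] [ContinuousSMul ℝ E]
    {Λ : Submodule ℤ E} [DiscreteTopology Λ] {m : E} (hprim : IsPrimitiveIn (Λ : Set E) m)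
    (hm : m ∈ Λ) (hm0 : m ≠ 0) {c : ℝ} (hc : c • m ∈ Λ) : ∃ j : ℤ, (j : ℝ) = c := by
  let factors : AddSubgroup ℝ :=
    Λ.toAddSubgroup.comap (LinearMap.toSpanSingleton ℝ E m).toAddMonoidHom
  have hdiscrete : DiscreteTopology factors :=
    DiscreteTopology.preimage_of_continuous_injective (Λ : Set E)
      (continuous_id.smul continuous_const) (smul_left_injective ℝ hm0)
  obtain ⟨⟨g, hg⟩, hgen⟩ := (AddSubgroup.discrete_iff_addCyclic.2 hdiscrete).exists_generator
  have hmultiple (x : ℝ) (hx : x • m ∈ Λ) : ∃ k : ℤ, (k : ℝ) * g = x := by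
    obtain ⟨k, hk⟩ := hgen ⟨x, hx⟩
    exact ⟨k, by simpa using congrArg Subtype.val hk⟩
  obtain ⟨k, hk⟩ := hmultiple 1 (by simpa using hm)
  obtain ⟨i, rfl⟩ := hmultiple c hc
  have hunit : IsUnit k :=
    hprim.isUnit_of_eq_smul hm0 (u := g • m) hg (by rw [smul_smul, hk, one_smul])
  have hkk : (k : ℝ) * k = 1 := by exact_mod_cast Int.isUnit_mul_self hunit
  refine ⟨i * k, ?_⟩
  push_cast
  linear_combination (i * g : ℝ) * hkk - (i * k : ℝ) * hk

lemma exists_pos_natCast_smul_mem_span_pair (v w : E) (a b : ℚ) :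
    ∃ N : ℕ, 0 < N ∧ (N : ℝ) • ((a : ℝ) • v + (b : ℝ) • w) ∈ Submodule.span ℤ {v, w} := by
  refine ⟨a.den * b.den, Nat.mul_pos a.pos b.pos,
    Submodule.mem_span_pair.2 ⟨a.num * b.den, b.num * a.den, ?_⟩⟩
  have ha : (a : ℝ) * a.den = a.num := by exact_mod_cast a.mul_den_eq_num
  have hb : (b : ℝ) * b.den = b.num := by exact_mod_cast b.mul_den_eq_num
  simp only [← Int.cast_smul_eq_zsmul ℝ]
  push_cast
  rw [← ha, ← hb]
  module

end Lattice

lemma latticeOf_eq_coe_span (v w : ℝ × ℝ) :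
    latticeOf v w = (Submodule.span ℤ {v, w} : Set (ℝ × ℝ)) := by
  ext q
  simp only [latticeOf, Set.mem_ofPred_eq, SetLike.mem_coe, Submodule.mem_span_pair,
    Int.cast_smul_eq_zsmul, eq_comm]

lemma linearIndependent_pair_of_det_ne_zero {v w : ℝ × ℝ} (hvw : v.1 * w.2 - v.2 * w.1 ≠ 0) :
    LinearIndependent ℝ ![v, w] := by
  refine LinearIndependent.pair_iff.2 fun s t h => ?_
  have h1 : s * v.1 + t * w.1 = 0 := congrArg Prod.fst h
  have h2 : s * v.2 + t * w.2 = 0 := congrArg Prod.snd h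
  constructor
  · exact (mul_eq_zero.1 (by linear_combination w.2 * h1 - w.1 * h2)).resolve_right hvw
  · exact (mul_eq_zero.1 (by linear_combination v.1 * h2 - v.2 * h1)).resolve_right hvw

lemma discreteTopology_span_pair {v w : ℝ × ℝ} (hvw : v.1 * w.2 - v.2 * w.1 ≠ 0) :
    DiscreteTopology (Submodule.span ℤ {v, w}) := by
  let b := basisOfLinearIndependentOfCardEqFinrank (linearIndependent_pair_of_det_ne_zero hvw)
    (by simp)
  have hb : Set.range b = {v, w} := by simp [b, Set.pair_comm]
  rw [← hb]
  infer_instance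

lemma exists_pos_natCast_smul_mem_span_of_ratPoint {v w q : ℝ × ℝ} (hv : ratPoint v)
    (hw : ratPoint w) (hvw : v.1 * w.2 - v.2 * w.1 ≠ 0) (hq : ratPoint q) :
    ∃ N : ℕ, 0 < N ∧ (N : ℝ) • q ∈ Submodule.span ℤ {v, w} := by
  obtain ⟨v₁, v₂, rfl⟩ := hv
  obtain ⟨w₁, w₂, rfl⟩ := hw
  obtain ⟨q₁, q₂, rfl⟩ := hq
  dsimp only at hvw
  -- Cramer's rule
  convert exists_pos_natCast_smul_mem_span_pair ((v₁ : ℝ), (v₂ : ℝ)) ((w₁ : ℝ), (w₂ : ℝ))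
    ((q₁ * w₂ - q₂ * w₁) / (v₁ * w₂ - v₂ * w₁)) ((v₁ * q₂ - v₂ * q₁) / (v₁ * w₂ - v₂ * w₁))
    using 5
  simp only [Rat.cast_div, Rat.cast_sub, Rat.cast_mul, Prod.smul_mk, Prod.mk_add_mk,
    smul_eq_mul, Prod.mk.injEq]
  constructor <;> rw [div_mul_eq_mul_div, div_mul_eq_mul_div, ← add_div, eq_div_iff hvw] <;> ring

lemma exists_pos_horizontal_mem_span {v w : ℝ × ℝ} (hv : ratPoint v) (hw : ratPoint w)
    (hvw : v.1 * w.2 - v.2 * w.1 ≠ 0) :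
    ∃ X : ℝ, 0 < X ∧ (X, 0) ∈ Submodule.span ℤ {v, w} := by
  obtain ⟨N, hN, hmem⟩ :=
    exists_pos_natCast_smul_mem_span_of_ratPoint hv hw hvw (q := (1, 0)) ⟨1, 0, by simp⟩
  exact ⟨N, Nat.cast_pos.2 hN, by simpa using hmem⟩

lemma exists_pos_vertical_mem_span {v w : ℝ × ℝ} (hv : ratPoint v) (hw : ratPoint w)
    (hvw : v.1 * w.2 - v.2 * w.1 ≠ 0) :
    ∃ Y : ℝ, 0 < Y ∧ (0, Y) ∈ Submodule.span ℤ {v, w} := by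
  obtain ⟨N, hN, hmem⟩ :=
    exists_pos_natCast_smul_mem_span_of_ratPoint hv hw hvw (q := (0, 1)) ⟨0, 1, by simp⟩
  exact ⟨N, Nat.cast_pos.2 hN, by simpa using hmem⟩

/-! ### Extreme points -/

section ExtremePoints

variable {𝕜 E : Type*} [Field 𝕜] [LinearOrder 𝕜] [IsStrictOrderedRing 𝕜]
  [AddCommGroup E] [Module 𝕜 E]

lemma sub_smul_notMem_of_mem_extremePoints {A : Set E} {d x : E} (hA : ∀ y ∈ A, y + d ∈ A)
    (hd : d ≠ 0) (hx : x ∈ A.extremePoints 𝕜) {s : 𝕜} (hs : 0 < s) : x - s • d ∉ A := by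
  intro hmem
  have hseg : x ∈ openSegment 𝕜 (x - s • d) (x + d) := by
    refine mem_openSegment_iff_div.2 ⟨1, s, one_pos, hs, ?_⟩
    match_scalars <;> field_simp
    ring
  have hsd : x - s • d = x := hx.2 hmem (hA x hx.1) hseg
  exact smul_ne_zero hs.ne' hd (by simpa using hsd)

lemma mem_extremePoints_convexHull_of_forall_le {F : Type*} [AddCommGroup F] [PartialOrder F]
    [IsOrderedAddMonoid F] [Module 𝕜 F] [PosSMulStrictMono 𝕜 F] {f : E →ₗ[𝕜] F}
    (hf : Function.Injective f) {S : Set E} {x : E} (hx : x ∈ S) (hmin : ∀ y ∈ S, f x ≤ f y) :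
    x ∈ (convexHull 𝕜 S).extremePoints 𝕜 := by
  refine (convex_convexHull 𝕜 S).mem_extremePoints_iff_mem_sdiff_convexHull_sdiff.2
    ⟨subset_convexHull 𝕜 S hx, fun hmem => ?_⟩
  have hle : convexHull 𝕜 S ⊆ {y | f x ≤ f y} :=
    convexHull_min hmin (convex_halfSpace_ge f.isLinear (f x))
  have hlt : convexHull 𝕜 (convexHull 𝕜 S \ {x}) ⊆ {y | f x < f y} :=
    convexHull_min (fun y hy => (hle hy.1).lt_of_ne fun h => hy.2 (hf h).symm)
      (convex_halfSpace_gt f.isLinear (f x))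
  exact lt_irrefl _ (hlt hmem)

end ExtremePoints

lemma posSMulStrictMono_prodLex {𝕜 α β : Type*} [Semiring 𝕜] [PartialOrder 𝕜]
    [AddCommMonoid α] [PartialOrder α] [Module 𝕜 α] [PosSMulStrictMono 𝕜 α]
    [AddCommMonoid β] [PartialOrder β] [Module 𝕜 β] [PosSMulStrictMono 𝕜 β] :
    PosSMulStrictMono 𝕜 (α ×ₗ β) where
  smul_lt_smul_of_pos_left c hc x y hxy := by
    rw [Prod.Lex.lt_iff] at hxy ⊢
    exact hxy.imp (smul_lt_smul_of_pos_left · hc)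
      fun h => ⟨congrArg (c • ·) h.1, smul_lt_smul_of_pos_left h.2 hc⟩

/-! ### Slopes and chords in the plane -/

/-- The determinant of the pair `(u, ·)`. It compares slopes, and for `0 < u.1` its sign tells on
which side of the line spanned by `u` a point lies (positive means above). -/
def wedge (u : ℝ × ℝ) : ℝ × ℝ →ₗ[ℝ] ℝ :=
  u.1 • LinearMap.snd ℝ ℝ ℝ - u.2 • LinearMap.fst ℝ ℝ ℝ

lemma wedge_apply (u q : ℝ × ℝ) : wedge u q = u.1 * q.2 - u.2 * q.1 := rfl

lemma slopeLE_iff_wedge_nonneg {u q : ℝ × ℝ} : slopeLE u q ↔ 0 ≤ wedge u q := by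
  rw [slopeLE, wedge_apply, sub_nonneg, mul_comm q.2]

lemma eq_smul_of_wedge_eq_zero {u q : ℝ × ℝ} (hu : u.1 ≠ 0) (h : wedge u q = 0) :
    q = (q.1 / u.1) • u := by
  rw [wedge_apply, sub_eq_zero] at h
  refine Prod.ext (div_mul_cancel₀ _ hu).symm (mul_left_cancel₀ hu ?_)
  rw [h, Prod.smul_snd, smul_eq_mul]
  field_simp

/-- If `q` lay on or above the chord from `x` to `y`, it would be an interior point of that chord
or of a vertical segment starting on it. -/
lemma wedge_neg_of_mem_extremePoints {A : Set (ℝ × ℝ)} (hA : Convex ℝ A) {Y : ℝ} (hY : 0 < Y)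
    (hAY : ∀ y ∈ A, y + (0, Y) ∈ A) {x y q : ℝ × ℝ} (hq : q ∈ A.extremePoints ℝ)
    (hx : x ∈ A) (hy : y ∈ A) (hxq : x.1 < q.1) (hqy : q.1 < y.1) :
    wedge (y - x) (q - x) < 0 := by
  by_contra! hnonneg
  have hxy : 0 < y.1 - x.1 := by linarith
  set height := wedge (y - x) (q - x) / ((y.1 - x.1) * Y) with hheight
  have hchord : q - height • ((0 : ℝ), Y) ∈ openSegment ℝ x y := by
    refine ⟨(y.1 - q.1) / (y.1 - x.1), (q.1 - x.1) / (y.1 - x.1), div_pos (sub_pos.2 hqy) hxy,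
      div_pos (sub_pos.2 hxq) hxy, by field_simp; ring, ?_⟩
    simp only [Prod.ext_iff, hheight, wedge_apply, Prod.fst_add, Prod.snd_add, Prod.fst_sub,
      Prod.snd_sub, Prod.smul_fst, Prod.smul_snd, smul_eq_mul]
    constructor <;> field_simp <;> ring
  obtain hzero | hpos : 0 = height ∨ 0 < height :=
    (div_nonneg hnonneg (mul_pos hxy hY).le).eq_or_lt
  · rw [← hzero, zero_smul, sub_zero] at hchord
    exact hxq.ne (congrArg Prod.fst (hq.2 hx hy hchord))
  · exact sub_smul_notMem_of_mem_extremePoints hAY (by simp [hY.ne']) hq hpos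
      (hA.openSegment_subset hx hy hchord)

/-- The lexicographic pair consisting of the height of a point above the line spanned by `u`, up
to the factor `u.1`, and minus its first coordinate. -/
def lexHeight (u : ℝ × ℝ) : ℝ × ℝ →ₗ[ℝ] ℝ ×ₗ ℝ :=
  (toLexLinearEquiv ℝ (ℝ × ℝ)).toLinearMap ∘ₗ (wedge u).prod (-LinearMap.fst ℝ ℝ ℝ)

lemma lexHeight_le_lexHeight {u q r : ℝ × ℝ} :
    lexHeight u q ≤ lexHeight u r ↔ wedge u q < wedge u r ∨ wedge u q = wedge u r ∧ r.1 ≤ q.1 := by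
  simp [lexHeight, Prod.Lex.le_iff]

lemma lexHeight_injective {u : ℝ × ℝ} (hu : u.1 ≠ 0) : Function.Injective (lexHeight u) := by
  refine (injective_iff_map_eq_zero _).2 fun q hq => ?_
  have hpair : (wedge u q, -q.1) = (0, 0) := congrArg ofLex hq
  obtain ⟨hwedge, hfst⟩ := Prod.mk_inj.1 hpair
  rw [eq_smul_of_wedge_eq_zero hu hwedge, neg_eq_zero.1 hfst, zero_div, zero_smul]

/-! ### The next vertex -/

lemma isUpperSet_Hset (n : ℝ) : IsUpperSet (Hset n) := by
  rintro q r hqr ⟨hq1, hq2, hq⟩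
  exact ⟨hq1.trans hqr.1, hq2.trans hqr.2,
    hq.trans (mul_le_mul hqr.1 hqr.2 hq2 (hq1.trans hqr.1))⟩

/-- The convex hull of the points of the coset `p + Λ` that lie in `H`. -/
abbrev latticeHull (H Λ : Set (ℝ × ℝ)) (p : ℝ × ℝ) : Set (ℝ × ℝ) :=
  convexHull ℝ (H ∩ translateSet p Λ)

lemma add_mem_latticeHull {H Λ : Set (ℝ × ℝ)} {p u : ℝ × ℝ} (hu : u ∈ Λ) (hpu : p + u ∈ H) :
    p + u ∈ latticeHull H Λ p :=
  subset_convexHull ℝ _ ⟨hpu, u, hu, rfl⟩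

/-- `m` is the primitive vector of smallest slope among the nonzero `u ∈ Λ` with `0 ≤ u.1` and
`p + u ∈ H`: the notion `Minsl(p)` for a region `H` that need not be bounded by a hyperbola. -/
structure IsMinslIn (H Λ : Set (ℝ × ℝ)) (p m : ℝ × ℝ) : Prop where
  mem : m ∈ Λ
  ne_zero : m ≠ 0
  fst_nonneg : 0 ≤ m.1
  add_mem : p + m ∈ H
  isPrimitiveIn : IsPrimitiveIn Λ m
  slopeLE : ∀ u ∈ Λ, u ≠ 0 → 0 ≤ u.1 → p + u ∈ H → slopeLE m u

lemma IsMinsl.isMinslIn {n : ℝ} {Λ : Set (ℝ × ℝ)} {p m : ℝ × ℝ} (hm : IsMinsl n Λ p m) :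
    IsMinslIn (Hset n) Λ p m :=
  let ⟨mem, ne_zero, fst_nonneg, add_mem, isPrimitiveIn, slopeLE⟩ := hm
  ⟨mem, ne_zero, fst_nonneg, add_mem, isPrimitiveIn, slopeLE⟩

section NextVertex

variable {H : Set (ℝ × ℝ)} {Λ : Submodule ℤ (ℝ × ℝ)} {p m : ℝ × ℝ}

open scoped Pointwise in
lemma latticeHull_add_mem (hH : IsUpperSet H) {d : ℝ × ℝ} (hd : d ∈ Λ)
    (hd0 : 0 ≤ d) {q : ℝ × ℝ} (hq : q ∈ latticeHull H Λ p) : q + d ∈ latticeHull H Λ p := by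
  have hsub : d +ᵥ (H ∩ translateSet p Λ) ⊆ H ∩ translateSet p Λ := by
    rintro _ ⟨_, ⟨hq, u, hu, rfl⟩, rfl⟩
    exact ⟨hH (le_add_of_nonneg_left hd0) hq, d + u, Λ.add_mem hd hu, add_left_comm _ _ _⟩
  have hhull := convexHull_mono (𝕜 := ℝ) hsub
  rw [convexHull_vadd] at hhull
  rw [add_comm]
  exact hhull (Set.vadd_mem_vadd_set hq)

lemma IsMinslIn.intCast_smul_mem (hm : IsMinslIn H Λ p m) (k : ℤ) : (k : ℝ) • m ∈ Λ := by
  rw [Int.cast_smul_eq_zsmul]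
  exact Λ.smul_mem k hm.mem

/-- A vertical `m` would point up, as `p` is the lowest point of the hull on its vertical line;
but then the horizontal lattice vector has smaller slope. -/
lemma IsMinslIn.fst_pos (hH : IsUpperSet H) {X Y : ℝ} (hX : 0 < X) (hXΛ : (X, 0) ∈ Λ) (hY : 0 < Y)
    (hYΛ : (0, Y) ∈ Λ) (hp : p ∈ (latticeHull H Λ p).extremePoints ℝ) (hm : IsMinslIn H Λ p m) :
    0 < m.1 := by
  refine hm.fst_nonneg.lt_of_ne fun hvert => hm.ne_zero (Prod.ext hvert.symm ?_)
  have hpH : p ∈ H := (extremePoints_convexHull_subset hp).1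
  have hdown : m.2 ≤ 0 := by
    have hpX : p + (X, 0) ∈ H := hH (le_add_of_nonneg_right ⟨hX.le, le_rfl⟩) hpH
    have hslope := hm.slopeLE (X, 0) hXΛ (by simp [hX.ne']) hX.le hpX
    rw [slopeLE_iff_wedge_nonneg, wedge_apply] at hslope
    nlinarith
  refine hdown.antisymm (not_lt.1 fun hneg => ?_)
  refine sub_smul_notMem_of_mem_extremePoints
    (fun _ => latticeHull_add_mem hH hYΛ ⟨le_rfl, hY.le⟩) (by simp [hY.ne']) hp
    (div_pos (neg_pos.2 hneg) hY) ?_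
  convert add_mem_latticeHull hm.mem hm.add_mem using 1
  ext
  · simp [← hvert]
  · simp [hY.ne']

lemma IsMinslIn.wedge_sub_nonneg (hH : IsUpperSet H) {Y : ℝ} (hY : 0 < Y) (hYΛ : (0, Y) ∈ Λ)
    (hp : p ∈ (latticeHull H Λ p).extremePoints ℝ) (hm : IsMinslIn H Λ p m) (hm1 : 0 < m.1)
    {q : ℝ × ℝ} (hq : q ∈ H ∩ translateSet p Λ) : 0 ≤ wedge m (q - p) := by
  obtain ⟨hqH, u, hu, rfl⟩ := hq
  simp only [add_sub_cancel_left]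
  obtain hleft | hright := lt_or_ge u.1 0
  · have hchord : wedge (p + m - (p + u)) (p - (p + u)) < 0 :=
      wedge_neg_of_mem_extremePoints (convex_convexHull ℝ _) hY
        (fun _ => latticeHull_add_mem hH hYΛ ⟨le_rfl, hY.le⟩) hp
        (add_mem_latticeHull hu hqH) (add_mem_latticeHull hm.mem hm.add_mem)
        (by simpa using hleft) (by simpa using hm1)
    simp only [wedge_apply, Prod.fst_sub, Prod.snd_sub, Prod.fst_add, Prod.snd_add] at hchord ⊢
    linarith
  · obtain rfl | hu0 := eq_or_ne u 0
    · simp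
    · exact slopeLE_iff_wedge_nonneg.1 (hm.slopeLE u hu hu0 hright hqH)

lemma IsMinslIn.fst_le_of_wedge_sub_eq_zero [DiscreteTopology Λ] (hm : IsMinslIn H Λ p m)
    (hm1 : 0 < m.1) {k : ℤ} (hk : IsGreatest {j : ℤ | p + (j : ℝ) • m ∈ H} k) {q : ℝ × ℝ}
    (hq : q ∈ H ∩ translateSet p Λ) (hline : wedge m (q - p) = 0) :
    q.1 ≤ (p + (k : ℝ) • m).1 := by
  obtain ⟨hqH, u, hu, rfl⟩ := hq
  rw [add_sub_cancel_left] at hline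
  have humul : u = (u.1 / m.1) • m := eq_smul_of_wedge_eq_zero hm1.ne' hline
  obtain ⟨j, hj⟩ := hm.isPrimitiveIn.exists_intCast_eq_of_smul_mem hm.mem hm.ne_zero
    (humul ▸ hu : (u.1 / m.1) • m ∈ Λ)
  rw [← hj] at humul
  have hjk : j ≤ k := hk.2 (humul ▸ hqH : p + (j : ℝ) • m ∈ H)
  rw [humul]
  simp only [Prod.fst_add, Prod.smul_fst, smul_eq_mul]
  gcongr

lemma IsMinslIn.nextpt_mem_extremePoints [DiscreteTopology Λ] (hH : IsUpperSet H) {Y : ℝ}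
    (hY : 0 < Y) (hYΛ : (0, Y) ∈ Λ) (hp : p ∈ (latticeHull H Λ p).extremePoints ℝ)
    (hm : IsMinslIn H Λ p m) (hm1 : 0 < m.1) {k : ℤ}
    (hk : IsGreatest {j : ℤ | p + (j : ℝ) • m ∈ H} k) :
    p + (k : ℝ) • m ∈ (latticeHull H Λ p).extremePoints ℝ := by
  have := posSMulStrictMono_prodLex (𝕜 := ℝ) (α := ℝ) (β := ℝ)
  refine mem_extremePoints_convexHull_of_forall_le (lexHeight_injective hm1.ne')
    ⟨hk.1, _, hm.intCast_smul_mem k, rfl⟩ fun q hq => lexHeight_le_lexHeight.2 ?_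
  have hon_line : wedge m (p + (k : ℝ) • m) = wedge m p := by
    simp only [wedge_apply, Prod.fst_add, Prod.snd_add, Prod.smul_fst, Prod.smul_snd, smul_eq_mul]
    ring
  rw [hon_line]
  obtain heq | hlt := (hm.wedge_sub_nonneg hH hY hYΛ hp hm1 hq).eq_or_lt
  · exact Or.inr ⟨(sub_eq_zero.1 ((map_sub (wedge m) q p).symm.trans heq.symm)).symm,
      hm.fst_le_of_wedge_sub_eq_zero hm1 hk hq heq.symm⟩
  · exact Or.inl (sub_pos.1 (hlt.trans_eq (map_sub (wedge m) q p)))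

lemma IsMinslIn.nextpt_fst_le (hH : IsUpperSet H) {Y : ℝ} (hY : 0 < Y) (hYΛ : (0, Y) ∈ Λ)
    (hp : p ∈ (latticeHull H Λ p).extremePoints ℝ) (hm : IsMinslIn H Λ p m) (hm1 : 0 < m.1)
    {k : ℤ} (hk : 0 < k) (hkH : p + (k : ℝ) • m ∈ H) {r : ℝ × ℝ}
    (hr : r ∈ (latticeHull H Λ p).extremePoints ℝ) (hpr : p.1 < r.1) :
    (p + (k : ℝ) • m).1 ≤ r.1 := by
  by_contra! hrn
  have hbelow : wedge (p + (k : ℝ) • m - p) (r - p) < 0 :=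
    wedge_neg_of_mem_extremePoints (convex_convexHull ℝ _) hY
      (fun _ => latticeHull_add_mem hH hYΛ ⟨le_rfl, hY.le⟩) hr hp.1
      (add_mem_latticeHull (hm.intCast_smul_mem k) hkH) hpr hrn
  have habove : 0 ≤ wedge m (r - p) :=
    hm.wedge_sub_nonneg hH hY hYΛ hp hm1 (extremePoints_convexHull_subset hr)
  have hscale : wedge (p + (k : ℝ) • m - p) (r - p) = k * wedge m (r - p) := by
    simp only [add_sub_cancel_left, wedge_apply, Prod.smul_fst, Prod.smul_snd, smul_eq_mul]
    ring
  rw [hscale] at hbelow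
  exact hbelow.not_ge (mul_nonneg (by exact_mod_cast hk.le) habove)

end NextVertex

theorem statement15_general {H : Set (ℝ × ℝ)} (hH : IsUpperSet H) {Λ : Submodule ℤ (ℝ × ℝ)}
    [DiscreteTopology Λ] (hhorizontal : ∃ X : ℝ, 0 < X ∧ (X, 0) ∈ Λ)
    (hvertical : ∃ Y : ℝ, 0 < Y ∧ (0, Y) ∈ Λ) {p : ℝ × ℝ}
    (hp : p ∈ (latticeHull H Λ p).extremePoints ℝ) {m : ℝ × ℝ} (hm : IsMinslIn H Λ p m)
    {k : ℤ} (hk : IsGreatest {j : ℤ | p + (j : ℝ) • m ∈ H} k) :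
    p + (k : ℝ) • m ∈ (latticeHull H Λ p).extremePoints ℝ ∧
    p.1 < (p + (k : ℝ) • m).1 ∧
    ∀ r ∈ (latticeHull H Λ p).extremePoints ℝ, p.1 < r.1 → (p + (k : ℝ) • m).1 ≤ r.1 := by
  obtain ⟨X, hX, hXΛ⟩ := hhorizontal
  obtain ⟨Y, hY, hYΛ⟩ := hvertical
  have hm1 : 0 < m.1 := hm.fst_pos hH hX hXΛ hY hYΛ hp
  have hk0 : 0 < k := one_pos.trans_le (hk.2 (by simpa using hm.add_mem))
  refine ⟨hm.nextpt_mem_extremePoints hH hY hYΛ hp hm1 hk, ?_,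
    fun r hr => hm.nextpt_fst_le hH hY hYΛ hp hm1 hk0 hk.1 hr⟩
  exact lt_add_of_pos_right _ (mul_pos (by exact_mod_cast hk0) hm1)

/-- If `p` is a vertex of `conv(H_n ∩ (p+Λ))` and `Nextpt(p) ≠ ∞` (i.e. the maximum
`kmax` of `{j ∈ ℤ : p + j·Minsl(p) ∈ H_n}` exists), then `Nextpt(p) = p + kmax·Minsl(p)`
is the next vertex: the vertex with smallest `x`-coordinate among the vertices whose
`x`-coordinate is strictly greater than `pₓ`. -/
theorem statement15 (n : ℝ) (hn : 0 < n) (v w : ℝ × ℝ)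
    (hvrat : ratPoint v) (hwrat : ratPoint w)
    (hvw : v.1 * w.2 - v.2 * w.1 ≠ 0)
    (p : ℝ × ℝ)
    (hp : p ∈ Set.extremePoints ℝ
        (convexHull ℝ (Hset n ∩ translateSet p (latticeOf v w))))
    (ms : ℝ × ℝ) (hms : IsMinsl n (latticeOf v w) p ms)
    (kmax : ℤ)
    (hkmax : IsGreatest {j : ℤ | p + (j : ℝ) • ms ∈ Hset n} kmax)
    (np : ℝ × ℝ) (hnp : np = p + (kmax : ℝ) • ms) :
    np ∈ Set.extremePoints ℝ
        (convexHull ℝ (Hset n ∩ translateSet p (latticeOf v w))) ∧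
    p.1 < np.1 ∧
    ∀ r ∈ Set.extremePoints ℝ
        (convexHull ℝ (Hset n ∩ translateSet p (latticeOf v w))),
      p.1 < r.1 → np.1 ≤ r.1 := by
  subst hnp
  rw [latticeOf_eq_coe_span] at hp hms ⊢
  have := discreteTopology_span_pair hvw
  exact statement15_general (isUpperSet_Hset n) (exists_pos_horizontal_mem_span hvrat hwrat hvw)
    (exists_pos_vertical_mem_span hvrat hwrat hvw) hp hms.isMinslIn hkmax

end
end
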